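/- Let X₁,…,Xₙ be Banach spaces such that X₁,…,X_{n−1} are Asplund spaces, let G ⊆ X := X₁ × ⋯ × Xₙ be open, and let f : G → ℝ be continuous. Then there exists a meager set A ⊆ G such that for each x ∈ G \ A: if all n partial Fréchet derivatives of f exist at x, then f is Fréchet differentiable at x. -/

import Mathlib

open Metric Set Topology

/-- A Banach space `Z` is Asplund: every continuous convex function on `Z` is Fréchet
differentiable at all points of a comeager set (i.e. the non-differentiability set is meager). -/
def IsAsplund (Z : Type*) [NormedAddCommGroup Z] [NormedSpace ℝ Z] : Prop :=
  ∀ g : Z → ℝ, Continuous g → ConvexOn ℝ Set.univ g →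
    IsMeagre {x : Z | ¬ DifferentiableAt ℝ g x}

open Filter Function

section Slices

variable {Y : Type*} [NormedAddCommGroup Y] [NormedSpace ℝ Y]

/-- A functional bounded above by `C * δ` on the ball of radius `δ` has norm at most `2 * C`. -/
theorem opNorm_le_of_le_on_ball (φ : Y →L[ℝ] ℝ) {δ C : ℝ} (hδ : 0 < δ) (hC : 0 ≤ C)
    (h : ∀ v : Y, ‖v‖ < δ → φ v ≤ C * δ) : ‖φ‖ ≤ 2 * C := by
  have habs : ∀ v : Y, ‖v‖ < δ → |φ v| ≤ C * δ := fun v hv => by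
    refine abs_le'.2 ⟨h v hv, ?_⟩
    simpa using h (-v) (by simpa using hv)
  refine φ.opNorm_le_of_shell (c := (2 : ℝ)) hδ (by positivity) (by norm_num) fun v hv1 hv2 => ?_
  rw [Real.norm_eq_abs]
  rw [Real.norm_eq_abs, abs_two] at hv1
  nlinarith [habs v hv2]

/-- Every nonempty bounded set of functionals on an Asplund space has a weak-star open slice
of small diameter. -/
theorem IsAsplund.exists_small_slice [CompleteSpace Y] (hY : IsAsplund Y)
    {Q : Set (Y →L[ℝ] ℝ)} (hQ : Q.Nonempty) {M : ℝ} (hM : ∀ φ ∈ Q, ‖φ‖ ≤ M)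
    {η : ℝ} (hη : 0 < η) :
    ∃ (h : Y) (c : ℝ) (L : Y →L[ℝ] ℝ), (∃ φ ∈ Q, c < φ h) ∧
      ∀ φ ∈ Q, c < φ h → ‖φ - L‖ ≤ η := by
  have : Nonempty Q := hQ.to_subtype
  have hM0 : 0 ≤ M := (norm_nonneg _).trans (hM _ hQ.some_mem)
  let p : Y → ℝ := fun y => ⨆ φ : Q, (φ : Y →L[ℝ] ℝ) y
  have hle : ∀ φ ∈ Q, ∀ y, φ y ≤ M * ‖y‖ := fun φ hφ y =>
    (le_abs_self _).trans (φ.le_of_opNorm_le (hM φ hφ) y)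
  have hbdd : ∀ y, BddAbove (range fun φ : Q => (φ : Y →L[ℝ] ℝ) y) := fun y =>
    ⟨M * ‖y‖, by rintro _ ⟨φ, rfl⟩; exact hle φ φ.2 y⟩
  have hp : ∀ φ ∈ Q, ∀ y, φ y ≤ p y := fun φ hφ y => le_ciSup (hbdd y) ⟨φ, hφ⟩
  have hsub : ∀ x y, p x ≤ p y + M * dist x y := fun x y => ciSup_le fun φ => by
    have h1 := hp φ φ.2 y
    have h2 := hle φ φ.2 (x - y)
    rw [map_sub] at h2
    rw [dist_eq_norm]
    linarith
  have hcont : Continuous p :=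
    (LipschitzWith.of_le_add_mul (⟨M, hM0⟩ : NNReal) hsub).continuous
  have hconv : ConvexOn ℝ univ p := by
    refine ⟨convex_univ, fun x _ y _ a b ha hb _ => ciSup_le fun φ => ?_⟩
    simp only [map_add, map_smul, smul_eq_mul]
    exact add_le_add (mul_le_mul_of_nonneg_left (hp φ φ.2 x) ha)
      (mul_le_mul_of_nonneg_left (hp φ φ.2 y) hb)
  obtain ⟨h, hh⟩ : ∃ h, DifferentiableAt ℝ p h := by
    obtain ⟨h, hh⟩ := (dense_of_mem_residual (hY p hcont hconv)).nonempty
    exact ⟨h, by simpa using hh⟩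
  obtain ⟨δ, hδ, hball⟩ := Metric.eventually_nhds_iff.1
    ((hasFDerivAt_iff_isLittleO_nhds_zero.1 hh.hasFDerivAt).def (show 0 < η / 4 by positivity))
  refine ⟨h, p h - η / 4 * δ, fderiv ℝ p h, ?_, fun φ hφ hc => ?_⟩
  · obtain ⟨φ, hφ⟩ := exists_lt_of_lt_ciSup
      (show p h - η / 4 * δ < ⨆ φ : Q, (φ : Y →L[ℝ] ℝ) h from
        sub_lt_self (p h) (by positivity))
    exact ⟨φ, φ.2, hφ⟩
  · refine (opNorm_le_of_le_on_ball _ hδ (show 0 ≤ η / 2 by positivity)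
      fun v hv => ?_).trans_eq (by ring)
    have h1 := (le_abs_self _).trans (hball (y := v) (by simpa using hv))
    have h2 := hp φ hφ (h + v)
    rw [map_add] at h2
    have h3 : η / 4 * ‖v‖ ≤ η / 4 * δ := by gcongr
    simp only [sub_apply]
    linarith

end Slices

/-- A closed set in `E × K`, with `K` compact, contains a minimal closed set projecting
onto a given set. -/
theorem exists_minimal_isClosed_fst_image {E K : Type*} [TopologicalSpace E]
    [TopologicalSpace K] [CompactSpace K] {Γ : Set (E × K)} (hΓ : IsClosed Γ) {W : Set E}
    (hW : W ⊆ Prod.fst '' Γ) :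
    ∃ F ⊆ Γ, Minimal (fun F : Set (E × K) => IsClosed F ∧ W ⊆ Prod.fst '' F) F := by
  refine zorn_superset_nonempty {F : Set (E × K) | IsClosed F ∧ W ⊆ Prod.fst '' F}
    (fun c hc hchain hne => ?_) Γ ⟨hΓ, hW⟩
  refine ⟨⋂₀ c, ⟨isClosed_sInter fun s hs => (hc hs).1, fun x hx => ?_⟩,
    fun s hs => sInter_subset_of_mem hs⟩
  have : Nonempty c := hne.to_subtype
  have hclosed : ∀ s : c, IsClosed {k : K | (x, k) ∈ s.1} := fun s =>
    (hc s.2).1.preimage (Continuous.prodMk_right x)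
  obtain ⟨k, hk⟩ := IsCompact.nonempty_iInter_of_directed_nonempty_isCompact_isClosed
    (fun s : c => {k : K | (x, k) ∈ s.1})
    (fun s t => (hchain.total s.2 t.2).elim
      (fun h => ⟨s, fun _ => id, fun _ hk => h hk⟩) (fun h => ⟨t, fun _ hk => h hk, fun _ => id⟩))
    (fun s => by
      obtain ⟨⟨y, k⟩, hk, rfl⟩ := (hc s.2).2 hx
      exact ⟨k, hk⟩)
    (fun s => (hclosed s).isCompact) hclosed
  exact ⟨(x, k), fun s hs => mem_iInter.1 hk ⟨s, hs⟩, rfl⟩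

theorem isClosed_setOf_ball_subset {E : Type*} [PseudoMetricSpace E] (G : Set E) (r : ℝ) :
    IsClosed {x | ball x r ⊆ G} := by
  have : {x | ball x r ⊆ G} = ⋂ y ∈ Gᶜ, {x | r ≤ dist y x} := by
    ext x
    simp only [mem_ofPred_eq, mem_iInter, mem_compl_iff, subset_def, mem_ball]
    exact forall_congr' fun y => by rw [← not_lt]; tauto
  rw [this]
  exact isClosed_biInter fun y _ => isClosed_le continuous_const (by fun_prop)

theorem dist_update_add_le {ι : Type*} [Fintype ι] [DecidableEq ι] {X : ι → Type*}
    [∀ i, NormedAddCommGroup (X i)] (x : ∀ i, X i) (i : ι) (h : X i) :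
    dist (update x i (x i + h)) x ≤ ‖h‖ := by
  refine (dist_pi_le_iff (norm_nonneg _)).2 fun j => ?_
  rcases eq_or_ne j i with rfl | hj
  · simp
  · simp [hj]

section Partial

variable {ι : Type*} [DecidableEq ι] {X : ι → Type*}
  [∀ i, NormedAddCommGroup (X i)] [∀ i, NormedSpace ℝ (X i)]

/-- On the ball of radius `r`, the increments of `f` at `x` in the direction of the `i`-th
coordinate agree with `φ` up to a relative error `ε`. -/
def ApproxPartial (f : (∀ i, X i) → ℝ) (i : ι) (φ : X i →L[ℝ] ℝ) (ε r : ℝ) (x : ∀ i, X i) :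
    Prop :=
  ∀ h : X i, ‖h‖ ≤ r → |f (update x i (x i + h)) - f x - φ h| ≤ ε * ‖h‖

/-- The points near which a single functional approximates all increments of `f` in the
`i`-th coordinate. -/
def stablePartialSet (f : (∀ i, X i) → ℝ) (i : ι) (ε : ℝ) : Set (∀ i, X i) :=
  {x | ∃ φ : X i →L[ℝ] ℝ, ∃ r > 0, ∀ᶠ x' in 𝓝 x, ApproxPartial f i φ ε r x'}

theorem isOpen_stablePartialSet (f : (∀ i, X i) → ℝ) (i : ι) (ε : ℝ) :
    IsOpen (stablePartialSet f i ε) := by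
  refine isOpen_iff_mem_nhds.2 fun x ⟨φ, r, hr, hx⟩ => ?_
  filter_upwards [hx.eventually_nhds] with y hy using ⟨φ, r, hr, hy⟩

/-- At a point that is stable for every `ε`, the `i`-th partial derivative approximates the
increments of `f` uniformly at all nearby points. -/
theorem exists_approxPartial_fderiv {f : (∀ i, X i) → ℝ} {i : ι} {x : ∀ i, X i}
    (hd : DifferentiableAt ℝ (fun t : X i => f (update x i t)) (x i))
    {ε : ℝ} (hε : 0 < ε) (hx : x ∈ stablePartialSet f i (ε / 3)) :
    ∃ r > 0, ∀ᶠ x' in 𝓝 x,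
      ApproxPartial f i (fderiv ℝ (fun t : X i => f (update x i t)) (x i)) ε r x' := by
  set L := fderiv ℝ (fun t : X i => f (update x i t)) (x i)
  obtain ⟨φ, r, hr, hev⟩ := hx
  have hnorm : ‖φ - L‖ ≤ 2 * (ε / 3) := by
    refine ContinuousLinearMap.opNorm_le_of_nhds_zero (by positivity) ?_
    filter_upwards [(hasFDerivAt_iff_isLittleO_nhds_zero.1 hd.hasFDerivAt).def
      (show 0 < ε / 3 by positivity), closedBall_mem_nhds (0 : X i) hr] with h h1 h2
    have h3 := hev.self_of_nhds h (by simpa using h2)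
    rw [sub_apply, Real.norm_eq_abs]
    rw [Real.norm_eq_abs, update_eq_self] at h1
    rw [abs_le] at h1 h3 ⊢
    constructor <;> linarith [h1.1, h1.2, h3.1, h3.2]
  refine ⟨r, hr, hev.mono fun y hy h hh => ?_⟩
  have h1 := hy h hh
  have h2 := (φ - L).le_of_opNorm_le hnorm h
  rw [sub_apply, Real.norm_eq_abs] at h2
  rw [abs_le] at h1 h2 ⊢
  constructor <;> linarith [h1.1, h1.2, h2.1, h2.2]

variable [Fintype ι]

/-- The points at which some functional of norm at most `M` approximates the increments of `f`
in the `i`-th coordinate on the ball of radius `r`, well inside `G`. -/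
def approxPartialSet (f : (∀ i, X i) → ℝ) (i : ι) (G : Set (∀ i, X i)) (ε r M : ℝ) :
    Set (∀ i, X i) :=
  {x | ball x (2 * r) ⊆ G ∧ ∃ φ : X i →L[ℝ] ℝ, ‖φ‖ ≤ M ∧ ApproxPartial f i φ ε r x}

/-- The closed ball of radius `M` in the dual, with the weak-star topology. -/
abbrev WeakStarBall (Y : Type*) [NormedAddCommGroup Y] [NormedSpace ℝ Y] (M : ℝ) :=
  ↥(WeakDual.toStrongDual ⁻¹' closedBall (0 : StrongDual ℝ Y) M)

/-- The graph of the set of approximate partial derivatives. -/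
def approxPartialGraph (f : (∀ i, X i) → ℝ) (i : ι) (G : Set (∀ i, X i)) (ε r M : ℝ) :
    Set ((∀ i, X i) × WeakStarBall (X i) M) :=
  {q | ball q.1 (2 * r) ⊆ G ∧ ApproxPartial f i (WeakDual.toStrongDual q.2.1) ε r q.1}

theorem fst_image_approxPartialGraph (f : (∀ i, X i) → ℝ) (i : ι) (G : Set (∀ i, X i))
    (ε r M : ℝ) :
    Prod.fst '' approxPartialGraph f i G ε r M = approxPartialSet f i G ε r M := by
  ext x
  constructor
  · rintro ⟨⟨y, φ⟩, ⟨h1, h2⟩, rfl⟩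
    exact ⟨h1, _, mem_closedBall_zero_iff.1 φ.2, h2⟩
  · rintro ⟨h1, φ, hφ, h2⟩
    exact ⟨(x, ⟨StrongDual.toWeakDual φ, by simpa using hφ⟩), ⟨h1, h2⟩, rfl⟩

theorem isClosed_approxPartialGraph {f : (∀ i, X i) → ℝ} (i : ι) {G : Set (∀ i, X i)}
    (hf : ContinuousOn f G) (ε : ℝ) {r : ℝ} (hr : 0 < r) (M : ℝ) :
    IsClosed (approxPartialGraph f i G ε r M) := by
  set P : Set ((∀ i, X i) × WeakStarBall (X i) M) := {q | ball q.1 (2 * r) ⊆ G} with hP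
  have hPc : IsClosed P := (isClosed_setOf_ball_subset G (2 * r)).preimage continuous_fst
  have heq : approxPartialGraph f i G ε r M = P ∩ ⋂ (h : X i) (_ : ‖h‖ ≤ r),
      P ∩ {q | |f (update q.1 i (q.1 i + h)) - f q.1 - q.2.1 h| ≤ ε * ‖h‖} := by
    ext q
    simp only [approxPartialGraph, ApproxPartial, mem_ofPred_eq, mem_inter_iff, mem_iInter, hP]
    exact ⟨fun h => ⟨h.1, fun v hv => ⟨h.1, h.2 v hv⟩⟩, fun h => ⟨h.1, fun v hv => (h.2 v hv).2⟩⟩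
  rw [heq]
  refine hPc.inter (isClosed_iInter fun h => isClosed_iInter fun hh => ?_)
  refine ContinuousOn.preimage_isClosed_of_isClosed
    (f := fun q : (∀ i, X i) × WeakStarBall (X i) M =>
      |f (update q.1 i (q.1 i + h)) - f q.1 - q.2.1 h|) ?_ hPc isClosed_Iic
  refine ((ContinuousOn.sub ?_ ?_).sub ?_).abs
  · refine hf.comp (Continuous.continuousOn ?_) fun q hq => hq ?_
    · exact continuous_fst.update i (by fun_prop)
    · exact (dist_update_add_le q.1 i h).trans_lt (by linarith)
  · exact hf.comp continuous_fst.continuousOn fun q hq => hq (mem_ball_self (by positivity))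
  · exact ((WeakDual.eval_continuous h).comp
      (continuous_subtype_val.comp continuous_snd)).continuousOn

instance WeakStarBall.compactSpace (Y : Type*) [NormedAddCommGroup Y] [NormedSpace ℝ Y] (M : ℝ) :
    CompactSpace (WeakStarBall Y M) :=
  isCompact_iff_compactSpace.1 (WeakDual.isCompact_closedBall (0 : StrongDual ℝ Y) M)

theorem isClosed_approxPartialSet {f : (∀ i, X i) → ℝ} (i : ι) {G : Set (∀ i, X i)}
    (hf : ContinuousOn f G) (ε : ℝ) {r : ℝ} (hr : 0 < r) (M : ℝ) :
    IsClosed (approxPartialSet f i G ε r M) := by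
  rw [← fst_image_approxPartialGraph]
  exact isClosedMap_fst_of_compactSpace _ (isClosed_approxPartialGraph i hf ε hr M)

theorem inter_stablePartialSet_nonempty {f : (∀ i, X i) → ℝ} {i : ι} [CompleteSpace (X i)]
    (hi : IsAsplund (X i)) {G : Set (∀ i, X i)} (hf : ContinuousOn f G) {ε : ℝ} (hε : 0 < ε)
    {r : ℝ} (hr : 0 < r) (M : ℝ) {W : Set (∀ i, X i)} (hWo : IsOpen W) (hW : W.Nonempty)
    (hsub : W ⊆ approxPartialSet f i G (ε / 2) r M) :
    (W ∩ stablePartialSet f i ε).Nonempty := by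
  rw [← fst_image_approxPartialGraph] at hsub
  obtain ⟨F, hFΓ, ⟨hFc, hFW⟩, hmin⟩ := exists_minimal_isClosed_fst_image
    (isClosed_approxPartialGraph i hf (ε / 2) hr M) hsub
  obtain ⟨h, c, L, ⟨_, ⟨q, hqF, rfl⟩, hq⟩, hL⟩ := hi.exists_small_slice
    (Q := (fun q : (∀ i, X i) × WeakStarBall (X i) M => WeakDual.toStrongDual q.2.1) '' F)
    (hW.elim fun x hx => ((hFW hx).elim fun q hq => ⟨_, q, hq.1, rfl⟩)) (M := M)
    (by rintro _ ⟨q, -, rfl⟩; exact mem_closedBall_zero_iff.1 q.2.2) (half_pos hε)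
  have hF'c : IsClosed (F ∩ {q | q.2.1 h ≤ c}) := hFc.inter <|
    isClosed_le ((WeakDual.eval_continuous h).comp
      (continuous_subtype_val.comp continuous_snd)) continuous_const
  have hnot : ¬ W ⊆ Prod.fst '' (F ∩ {q | q.2.1 h ≤ c}) := fun hcov =>
    hq.not_ge (hmin ⟨hF'c, hcov⟩ inter_subset_left hqF).2
  obtain ⟨x, hxW, hx⟩ := not_subset.1 hnot
  refine ⟨x, hxW, L, r, hr, ?_⟩
  filter_upwards [hWo.mem_nhds hxW,
    (isClosedMap_fst_of_compactSpace _ hF'c).isOpen_compl.mem_nhds hx] with y hyW hy v hv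
  obtain ⟨q, hqF, rfl⟩ := hFW hyW
  have hqc : c < WeakDual.toStrongDual q.2.1 h := lt_of_not_ge fun hle => hy ⟨q, ⟨hqF, hle⟩, rfl⟩
  have h1 := (hFΓ hqF).2 v hv
  have h2 := (WeakDual.toStrongDual q.2.1 - L).le_of_opNorm_le (hL _ ⟨q, hqF, rfl⟩ hqc) v
  rw [sub_apply, Real.norm_eq_abs] at h2
  rw [abs_le] at h1 h2 ⊢
  constructor <;> linarith [h1.1, h1.2, h2.1, h2.2]

theorem isNowhereDense_approxPartialSet_diff {f : (∀ i, X i) → ℝ} {i : ι} [CompleteSpace (X i)]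
    (hi : IsAsplund (X i)) {G : Set (∀ i, X i)} (hf : ContinuousOn f G) {ε : ℝ} (hε : 0 < ε)
    {r : ℝ} (hr : 0 < r) (M : ℝ) :
    IsNowhereDense (approxPartialSet f i G (ε / 2) r M \ stablePartialSet f i ε) := by
  have hcl : IsClosed (approxPartialSet f i G (ε / 2) r M \ stablePartialSet f i ε) :=
    (isClosed_approxPartialSet i hf _ hr M).sdiff (isOpen_stablePartialSet f i ε)
  rw [hcl.isNowhereDense_iff, ← not_nonempty_iff_eq_empty]
  intro hne
  obtain ⟨x, hx, hx'⟩ := inter_stablePartialSet_nonempty hi hf hε hr M isOpen_interior hne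
    (interior_subset.trans sdiff_subset)
  exact (interior_subset hx).2 hx'

/-- A point where the `i`-th partial derivative exists is a point of approximate partial
differentiability at some scale `1 / (m + 1)`. -/
theorem exists_mem_approxPartialSet {f : (∀ i, X i) → ℝ} {i : ι} {G : Set (∀ i, X i)}
    (hG : IsOpen G) {x : ∀ i, X i} (hx : x ∈ G) {ε : ℝ} (hε : 0 < ε)
    (hd : DifferentiableAt ℝ (fun t : X i => f (update x i t)) (x i)) :
    ∃ m : ℕ, x ∈ approxPartialSet f i G ε (1 / ((m : ℝ) + 1)) m := by
  set L := fderiv ℝ (fun t : X i => f (update x i t)) (x i)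
  obtain ⟨δ, hδ, hball⟩ := Metric.eventually_nhds_iff.1
    ((hasFDerivAt_iff_isLittleO_nhds_zero.1 hd.hasFDerivAt).def hε)
  obtain ⟨ρ, hρ, hρG⟩ := Metric.isOpen_iff.1 hG x hx
  have hlim := tendsto_one_div_add_atTop_nhds_zero_nat (𝕜 := ℝ)
  obtain ⟨m, hm1, hm2, hm3⟩ := ((hlim.eventually (gt_mem_nhds hδ)).and
    ((hlim.eventually (gt_mem_nhds (half_pos hρ))).and
      (tendsto_natCast_atTop_atTop.eventually_ge_atTop ‖L‖))).exists
  refine ⟨m, (ball_subset_ball (by linarith)).trans hρG, L, hm3, fun h hh => ?_⟩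
  simpa using hball (y := h) (by simpa using hh.trans_lt hm1)

/-- If `f` has all partial derivatives at `x`, and all but one of them approximate the
increments of `f` uniformly at nearby points, then `f` is differentiable at `x`. -/
theorem differentiableAt_of_approxPartial {f : (∀ i, X i) → ℝ} {x : ∀ i, X i} (k : ι)
    (L : ∀ i, X i →L[ℝ] ℝ) (hk : HasFDerivAt (fun t : X k => f (update x k t)) (L k) (x k))
    (hL : ∀ i, i ≠ k → ∀ ε > 0, ∃ r > 0, ∀ᶠ x' in 𝓝 x, ApproxPartial f i (L i) ε r x') :
    DifferentiableAt ℝ f x := by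
  have key : ∀ s : Finset ι, k ∉ s →
      (fun v : ∀ i, X i => f ((insert k s).piecewise (x + v) x) - f x
        - ∑ i ∈ insert k s, L i (v i)) =o[𝓝 0] fun v => v := by
    intro s
    induction s using Finset.induction_on with
    | empty =>
      intro _
      have h0 := (hasFDerivAt_iff_isLittleO_nhds_zero.1 hk).comp_tendsto
        (show Tendsto (fun v : ∀ i, X i => v k) (𝓝 0) (𝓝 0) from
          (continuous_apply k).tendsto' _ _ rfl)
      have h1 : (fun v : ∀ i, X i => v k) =O[𝓝 0] fun v => v :=
        Asymptotics.isBigO_of_le _ fun v => norm_le_pi_norm v k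
      refine (h0.trans_isBigO h1).congr_left fun v => ?_
      rw [Finset.piecewise_insert, Finset.piecewise_empty]
      simp
    | insert i s his ih =>
      intro hks
      obtain ⟨hki, hks'⟩ : k ≠ i ∧ k ∉ s := by simpa using hks
      have hi : i ∉ insert k s := by simp [his, hki.symm]
      have hstep : (fun v : ∀ i, X i => f ((insert i (insert k s)).piecewise (x + v) x)
          - f ((insert k s).piecewise (x + v) x) - L i (v i)) =o[𝓝 0] fun v => v := by
        refine Asymptotics.isLittleO_iff.2 fun ε hε => ?_
        obtain ⟨r, hr, hev⟩ := hL i hki.symm ε hε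
        have hlim : Tendsto (fun v : ∀ i, X i => (insert k s).piecewise (x + v) x) (𝓝 0) (𝓝 x) := by
          refine tendsto_pi_nhds.2 fun j => ?_
          by_cases hj : j ∈ insert k s
          · simp only [Finset.piecewise_eq_of_mem _ _ _ hj, Pi.add_apply]
            exact (continuous_const.add (continuous_apply j)).tendsto' _ _ (by simp)
          · simp only [Finset.piecewise_eq_of_notMem _ _ _ hj]
            exact tendsto_const_nhds
        filter_upwards [hlim.eventually hev, closedBall_mem_nhds 0 hr] with v hv hvr
        have hvi : ‖v i‖ ≤ ‖v‖ := norm_le_pi_norm v i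
        have := hv (v i) (hvi.trans (by simpa using hvr))
        rw [Finset.piecewise_eq_of_notMem _ _ _ hi] at this
        rw [Finset.piecewise_insert, Real.norm_eq_abs]
        exact this.trans (by gcongr)
      rw [Finset.insert_comm]
      refine ((ih hks').add hstep).congr_left fun v => ?_
      rw [Finset.sum_insert hi]
      ring
  have huniv : insert k (Finset.univ.erase k) = (Finset.univ : Finset ι) :=
    Finset.insert_erase (Finset.mem_univ k)
  have hfull := key (Finset.univ.erase k) (Finset.notMem_erase _ _)
  have hpw : ∀ v, (insert k (Finset.univ.erase k)).piecewise (x + v) x = x + v := fun v =>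
    funext fun j => Finset.piecewise_eq_of_mem _ _ _ (by simp [huniv])
  simp only [hpw, huniv] at hfull
  refine HasFDerivAt.differentiableAt
    (f' := ∑ i, (L i).comp (ContinuousLinearMap.proj (R := ℝ) (φ := X) i)) ?_
  refine hasFDerivAt_iff_isLittleO_nhds_zero.2 (hfull.congr_left fun v => ?_)
  simp

end Partial

theorem meagre_exceptional_set_partials_asplund
    {n : ℕ} {X : Fin (n + 1) → Type*}
    [∀ i, NormedAddCommGroup (X i)] [∀ i, NormedSpace ℝ (X i)] [∀ i, CompleteSpace (X i)]
    (hAsp : ∀ i : Fin (n + 1), i ≠ Fin.last n → IsAsplund (X i))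
    (G : Set (∀ i, X i)) (hG : IsOpen G)
    (f : (∀ i, X i) → ℝ) (hf : ContinuousOn f G) :
    ∃ A : Set (∀ i, X i), A ⊆ G ∧ IsMeagre A ∧
      ∀ x ∈ G \ A,
        (∀ i : Fin (n + 1),
          DifferentiableAt ℝ (fun t : X i => f (Function.update x i t)) (x i)) →
        DifferentiableAt ℝ f x := by
  let B : {i : Fin (n + 1) // i ≠ Fin.last n} → ℕ → ℕ → Set (∀ i, X i) := fun i k m =>
    approxPartialSet f i G (1 / ((k : ℝ) + 1) / 2) (1 / ((m : ℝ) + 1)) m \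
      stablePartialSet f i (1 / ((k : ℝ) + 1))
  refine ⟨(⋃ i, ⋃ k, ⋃ m, B i k m) ∩ G, inter_subset_right, ?_, fun x ⟨hxG, hxA⟩ hd => ?_⟩
  · refine IsMeagre.mono inter_subset_left
      (isMeagre_iUnion fun i => isMeagre_iUnion fun k => isMeagre_iUnion
      fun m => IsNowhereDense.isMeagre ?_)
    exact isNowhereDense_approxPartialSet_diff (hAsp i i.2) hf (by positivity) (by positivity) _
  · refine differentiableAt_of_approxPartial (Fin.last n) _ (hd _).hasFDerivAt
      fun i hi ε hε => exists_approxPartial_fderiv (hd i) hε ?_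
    obtain ⟨k, hk⟩ := exists_nat_one_div_lt (show 0 < ε / 3 by positivity)
    obtain ⟨m, hm⟩ := exists_mem_approxPartialSet hG hxG
      (show 0 < 1 / ((k : ℝ) + 1) / 2 by positivity) (hd i)
    have hst : x ∈ stablePartialSet f i (1 / ((k : ℝ) + 1)) := by
      by_contra hst
      exact hxA ⟨mem_iUnion.2 ⟨⟨i, hi⟩, mem_iUnion.2 ⟨k, mem_iUnion.2 ⟨m, hm, hst⟩⟩⟩, hxG⟩
    obtain ⟨φ, r, hr, hev⟩ := hst
    exact ⟨φ, r, hr, hev.mono fun y hy h hh => (hy h hh).trans (by gcongr)⟩
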